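/- For every τ ∈ ℍ, the quasi-period η₁(τ) is a holomorphic function of τ and satisfies dη₁/dτ = (i/(4π))[2η₁(τ)² − (1/6)g₂(τ)]. -/

import Mathlib

open Complex Filter Topology Asymptotics

noncomputable section

/-- membership in the lattice `Λ_τ = ℤ + τℤ`. -/
def InLattice (τ z : ℂ) : Prop := ∃ m n : ℤ, z = (m : ℂ) + (n : ℂ) * τ

/-- the half-period generators `ω₀ = 0, ω₁ = 1, ω₂ = τ, ω₃ = 1 + τ`. -/
def halfp (τ : ℂ) : Fin 4 → ℂ := ![0, 1, τ, 1 + τ]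

/-- the Weierstrass elliptic function `℘(z|τ)`. -/
def wp (τ z : ℂ) : ℂ :=
  z⁻¹ ^ 2 + ∑' w : {w : ℤ × ℤ // w ≠ 0},
    ((z - ((w.1.1 : ℂ) + (w.1.2 : ℂ) * τ))⁻¹ ^ 2 - ((w.1.1 : ℂ) + (w.1.2 : ℂ) * τ)⁻¹ ^ 2)

/-- `℘′(z|τ)`, the `z`-derivative of `℘`. -/
def wpd (τ z : ℂ) : ℂ := deriv (wp τ) z

/-- `℘″(z|τ)`. -/
def wpdd (τ z : ℂ) : ℂ := deriv (wpd τ) z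

def e1 (τ : ℂ) : ℂ := wp τ (1 / 2)
def e2 (τ : ℂ) : ℂ := wp τ (τ / 2)
def e3 (τ : ℂ) : ℂ := wp τ ((1 + τ) / 2)

def g2 (τ : ℂ) : ℂ := -4 * (e1 τ * e2 τ + e1 τ * e3 τ + e2 τ * e3 τ)

/-- `zeta` is the Weierstrass zeta function: for each `τ ∈ ℍ`, `zeta τ` is odd, satisfies
`∂ζ/∂z = -℘` off the lattice, and `ζ(z|τ) - 1/z → 0` as `z → 0`. -/
def IsWeierstrassZeta (zeta : ℂ → ℂ → ℂ) : Prop :=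
  ∀ τ : ℂ, 0 < τ.im →
    (∀ z : ℂ, zeta τ (-z) = - zeta τ z) ∧
    (∀ z : ℂ, ¬ InLattice τ z → HasDerivAt (zeta τ) (- wp τ z) z) ∧
    Tendsto (fun z => zeta τ z - z⁻¹) (𝓝[≠] (0 : ℂ)) (𝓝 0)

/-- `eta1 τ = ζ(z+1|τ) - ζ(z|τ)` is the first quasi-period. -/
def IsEta1 (zeta : ℂ → ℂ → ℂ) (eta1 : ℂ → ℂ) : Prop :=
  ∀ τ : ℂ, 0 < τ.im → ∀ z : ℂ, ¬ InLattice τ z →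
    eta1 τ = zeta τ (z + 1) - zeta τ z

/-- `eta2 τ = ζ(z+τ|τ) - ζ(z|τ)` is the second quasi-period. -/
def IsEta2 (zeta : ℂ → ℂ → ℂ) (eta2 : ℂ → ℂ) : Prop :=
  ∀ τ : ℂ, 0 < τ.im → ∀ z : ℂ, ¬ InLattice τ z →
    eta2 τ = zeta τ (z + τ) - zeta τ z

/-- `sigma` is the Weierstrass sigma function: entire, odd, with
`∂/∂z log σ = ζ` off the lattice and `σ(z|τ)/z → 1` as `z → 0`. -/
def IsWeierstrassSigma (zeta sigma : ℂ → ℂ → ℂ) : Prop :=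
  ∀ τ : ℂ, 0 < τ.im →
    (∀ z : ℂ, sigma τ (-z) = - sigma τ z) ∧
    Differentiable ℂ (sigma τ) ∧
    (∀ z : ℂ, ¬ InLattice τ z → HasDerivAt (sigma τ) (zeta τ z * sigma τ z) z) ∧
    Tendsto (fun z => sigma τ z / z) (𝓝[≠] (0 : ℂ)) (𝓝 1)

/-- the Hamiltonian system (142) for `(p(τ), A(τ))` on `V`. -/
def HamSystem (n : Fin 4 → ℂ) (zeta : ℂ → ℂ → ℂ) (eta1 : ℂ → ℂ)
    (V : Set ℂ) (p A : ℂ → ℂ) : Prop :=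
  ∀ τ ∈ V,
    HasDerivAt p ((-Complex.I / (4 * (Real.pi : ℂ))) *
      (2 * A τ - zeta τ (2 * p τ) + 2 * p τ * eta1 τ)) τ ∧
    HasDerivAt A ((Complex.I / (4 * (Real.pi : ℂ))) *
      ((2 * wp τ (2 * p τ) + 2 * eta1 τ) * A τ - (3 / 2) * wpd τ (2 * p τ)
        - ∑ k : Fin 4, n k * (n k + 1) * wpd τ (p τ + halfp τ k / 2))) τ

/-- the generalized Lamé potential `I(z;τ)`. -/
def Ipot (n : Fin 4 → ℂ) (zeta : ℂ → ℂ → ℂ) (A B p τ z : ℂ) : ℂ :=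
  (∑ k : Fin 4, n k * (n k + 1) * wp τ (z + halfp τ k / 2))
    + (3 / 4) * (wp τ (z + p) + wp τ (z - p))
    + A * (zeta τ (z + p) - zeta τ (z - p)) + B

end

namespace PeriodPair

variable (L : PeriodPair)

lemma countable_lattice : (L.lattice : Set ℂ).Countable :=
  Set.countable_coe_iff.mp (Countable.of_equiv _ L.latticeEquivProd.symm.toEquiv)

lemma isPreconnected_compl_lattice : IsPreconnected (L.lattice : Set ℂ)ᶜ :=
  (L.countable_lattice.isConnected_compl_of_one_lt_rank
    (by simp [Complex.rank_real_complex])).isPreconnected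

/-- `℘` does not extend analytically to a lattice point. -/
lemma not_eventuallyEq_weierstrassP_of_analyticAt {f : ℂ → ℂ} {l : ℂ} (hl : l ∈ L.lattice)
    (hf : AnalyticAt ℂ f l) : ¬ ℘[L] =ᶠ[𝓝[≠] l] f := by
  intro h
  have h₁ := meromorphicOrderAt_congr h
  rw [L.order_weierstrassP l hl] at h₁
  have := hf.meromorphicOrderAt_nonneg
  rw [← h₁] at this
  exact absurd this (by decide)

lemma eventually_notMem_lattice (x : ℂ) : ∀ᶠ z in 𝓝[≠] x, z ∉ L.lattice := by
  filter_upwards [mem_nhdsWithin_of_mem_nhds (L.compl_lattice_sdiff_singleton_mem_nhds x),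
    self_mem_nhdsWithin] with z hz hx h
  exact hz ⟨h, hx⟩

lemma hasDerivAt_weierstrassP {z : ℂ} (hz : z ∉ L.lattice) :
    HasDerivAt ℘[L] (℘'[L] z) z := by
  have := (L.analyticOnNhd_weierstrassP z hz).differentiableAt.hasDerivAt
  rwa [L.deriv_weierstrassP] at this

lemma hasDerivAt_derivWeierstrassP {z : ℂ} (hz : z ∉ L.lattice) :
    HasDerivAt ℘'[L] (6 * ℘[L] z ^ 2 - L.g₂ / 2) z := by
  have hopen : IsOpen (L.lattice : Set ℂ)ᶜ := L.isClosed_lattice.isOpen_compl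
  have hP := L.analyticOnNhd_weierstrassP
  have hP' := L.analyticOnNhd_derivWeierstrassP
  have hd : ∀ w ∉ L.lattice, HasDerivAt ℘'[L] (deriv ℘'[L] w) w :=
    fun w hw ↦ (hP' w hw).differentiableAt.hasDerivAt
  have hmul : ∀ w ∈ (L.lattice : Set ℂ)ᶜ,
      ℘'[L] w * (deriv ℘'[L] w - (6 * ℘[L] w ^ 2 - L.g₂ / 2)) = 0 := by
    intro w hw
    have h₁ := (hd w hw).pow 2
    have h₂ := ((((L.hasDerivAt_weierstrassP hw).pow 3).const_mul 4).sub
      ((L.hasDerivAt_weierstrassP hw).const_mul L.g₂)).sub_const L.g₃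
    have h₃ : (℘'[L] ^ 2) =ᶠ[𝓝 w] fun z ↦ 4 * ℘[L] z ^ 3 - L.g₂ * ℘[L] z - L.g₃ := by
      filter_upwards [hopen.mem_nhds hw] with z hz using L.derivWeierstrassP_sq z hz
    have := (h₁.congr_of_eventuallyEq h₃.symm).unique h₂
    push_cast at this
    linear_combination this / 2
  rcases AnalyticOnNhd.eq_zero_or_eq_zero_of_mul_eq_zero hP'
    (hP'.deriv.sub (((analyticOnNhd_const (v := (6 : ℂ))).mul (hP.pow 2)).sub
      (analyticOnNhd_const (v := L.g₂ / 2))))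
    hmul L.isPreconnected_compl_lattice with h | h
  · exfalso
    obtain ⟨c, hc⟩ := hopen.exists_is_const_of_deriv_eq_zero L.isPreconnected_compl_lattice
      hP.differentiableOn (fun w hw ↦ by simpa using h w hw)
    refine L.not_eventuallyEq_weierstrassP_of_analyticAt (zero_mem _)
      (analyticAt_const (v := c)) ?_
    filter_upwards [L.eventually_notMem_lattice 0] with w hw using hc w hw
  · have := h z hz
    simp only [Pi.sub_apply, Pi.pow_apply, sub_eq_zero] at this
    exact this ▸ hd z hz

lemma derivWeierstrassP_eq_zero_of_two_mul_mem {a : ℂ} (h : 2 * a ∈ L.lattice) :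
    ℘'[L] a = 0 := by
  have h₁ := L.derivWeierstrassP_add_coe (-a) ⟨_, h⟩
  rw [L.derivWeierstrassP_neg, show -a + 2 * a = a by ring] at h₁
  linear_combination h₁ / 2

/-- `℘` takes distinct values at incongruent half-periods. -/
lemma weierstrassP_ne_of_two_mul_mem {a b : ℂ} (ha : a ∉ L.lattice) (hb : b ∉ L.lattice)
    (ha₂ : 2 * a ∈ L.lattice) (hb₂ : 2 * b ∈ L.lattice) (hab : b - a ∉ L.lattice) :
    ℘[L] a ≠ ℘[L] b := by
  intro heq
  let d := b - a
  let w : ℂ → ℂ := fun z ↦ ℘[L] z - ℘[L] (z + d)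
  let w' : ℂ → ℂ := fun z ↦ ℘'[L] z - ℘'[L] (z + d)
  let S : Set ℂ := L.lattice ∪ (fun l ↦ l - d) '' L.lattice
  have hS : ∀ z ∉ S, z ∉ L.lattice ∧ z + d ∉ L.lattice := fun z hz ↦
    ⟨fun h ↦ hz (.inl h), fun h ↦ hz (.inr ⟨z + d, h, by simp⟩)⟩
  have haS : a ∉ S := by
    rintro (h | ⟨l, hl, h⟩)
    · exact ha h
    · exact hb (by convert! hl using 1; simp [d] at h; linear_combination - h)
  have hScl : IsClosed S :=
    L.isClosed_lattice.union ((Homeomorph.subRight d).isClosedMap _ L.isClosed_lattice)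
  have hw : ∀ z ∉ S, HasDerivAt w (w' z) z := fun z hz ↦
    (L.hasDerivAt_weierstrassP (hS z hz).1).sub
      ((L.hasDerivAt_weierstrassP (hS z hz).2).comp_add_const z d)
  have hw' : ∀ z ∉ S, HasDerivAt w' (6 * (℘[L] z + ℘[L] (z + d)) * w z) z := fun z hz ↦ by
    refine ((L.hasDerivAt_derivWeierstrassP (hS z hz).1).sub
      ((L.hasDerivAt_derivWeierstrassP (hS z hz).2).comp_add_const z d)).congr_deriv ?_
    simp only [w]; ring
  have hwan : AnalyticOnNhd ℂ w Sᶜ := DifferentiableOn.analyticOnNhd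
    (fun z hz ↦ (hw z hz).differentiableAt.differentiableWithinAt) hScl.isOpen_compl
  have hpan : AnalyticAt ℂ (fun z ↦ 6 * (℘[L] z + ℘[L] (z + d))) a := by
    have h₁ := L.analyticOnNhd_weierstrassP a ha
    have h₂ := (L.analyticOnNhd_weierstrassP (a + d) (by simpa [d] using hb)).comp_of_eq
      (f := fun z : ℂ ↦ z + d) (by fun_prop) rfl
    exact analyticAt_const.mul (h₁.add h₂)
  have hderiv : deriv w =ᶠ[𝓝 a] w' := by
    filter_upwards [hScl.isOpen_compl.mem_nhds haS] with z hz using (hw z hz).deriv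
  have hderiv₂ : deriv (deriv w) =ᶠ[𝓝 a] (fun z ↦ 6 * (℘[L] z + ℘[L] (z + d))) * w := by
    filter_upwards [hderiv.deriv, hScl.isOpen_compl.mem_nhds haS] with z hz hzS
    rw [hz, (hw' z hzS).deriv, Pi.mul_apply]
  have hwa : w a = 0 := by simp [w, d, heq]
  have hw'a : deriv w a = 0 := by
    rw [hderiv.eq_of_nhds]
    simp [w', d, L.derivWeierstrassP_eq_zero_of_two_mul_mem ha₂,
      L.derivWeierstrassP_eq_zero_of_two_mul_mem hb₂]
  have hord : analyticOrderAt w a = ⊤ := by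
    have h₁ := (hwan a haS).analyticOrderAt_deriv_add_one
    have h₂ := (hwan a haS).deriv.analyticOrderAt_deriv_add_one
    simp only [hwa, hw'a, sub_zero] at h₁ h₂
    rw [analyticOrderAt_congr hderiv₂, analyticOrderAt_mul hpan (hwan a haS)] at h₂
    rw [show analyticOrderAt (deriv w) a = _ from h₂.symm] at h₁
    by_contra htop
    lift analyticOrderAt w a to ℕ using htop with n hn
    have : (n : ℕ∞) + 1 ≤ n := calc
      (n : ℕ∞) + 1 ≤ _ := by gcongr; exact le_add_self.trans le_self_add
      _ = n := h₁
    exact absurd this (by norm_cast; omega)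
  have hzero : Set.EqOn w 0 Sᶜ := hwan.eqOn_zero_of_preconnected_of_eventuallyEq_zero
    ((L.countable_lattice.union (L.countable_lattice.image _)).isConnected_compl_of_one_lt_rank
      (by simp [Complex.rank_real_complex])).isPreconnected haS (analyticOrderAt_eq_top.mp hord)
  refine L.not_eventuallyEq_weierstrassP_of_analyticAt (zero_mem _)
    (f := fun z ↦ ℘[L] (z + d)) ?_ ?_
  · exact (L.analyticOnNhd_weierstrassP (0 + d) (by simpa [d] using hab)).comp_of_eq
      (f := fun z : ℂ ↦ z + d) (by fun_prop) rfl
  · have : ∀ᶠ z in 𝓝 (0 : ℂ), z + d ∉ L.lattice :=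
      (by fun_prop : Continuous fun z : ℂ ↦ z + d).continuousAt.eventually_mem
        (L.isClosed_lattice.isOpen_compl.mem_nhds (by simpa [d] using hab))
    filter_upwards [L.eventually_notMem_lattice 0, mem_nhdsWithin_of_mem_nhds this] with z h₁ h₂
    refine sub_eq_zero.mp (hzero ?_)
    rintro (h | ⟨l, hl, rfl⟩)
    · exact h₁ h
    · exact h₂ (by simpa using hl)

/-- The invariant `g₂` in terms of the values of `℘` at half-periods. -/
lemma g₂_eq_of_half_periods :
    L.g₂ = -4 * (℘[L] (L.ω₁ / 2) * ℘[L] (L.ω₂ / 2) +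
      ℘[L] (L.ω₁ / 2) * ℘[L] ((L.ω₁ + L.ω₂) / 2) +
      ℘[L] (L.ω₂ / 2) * ℘[L] ((L.ω₁ + L.ω₂) / 2)) := by
  have h₁ := L.ω₁_div_two_notMem_lattice
  have h₂ := L.ω₂_div_two_notMem_lattice
  have h₃ : (L.ω₁ + L.ω₂) / 2 ∉ L.lattice := by
    convert! (L.mul_ω₁_add_mul_ω₂_mem_lattice (α := 1 / 2) (β := 1 / 2)).not.mpr (by norm_num)
      using 2
    push_cast; ring
  have h₂₁ : L.ω₂ / 2 - L.ω₁ / 2 ∉ L.lattice := by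
    convert! (L.mul_ω₁_add_mul_ω₂_mem_lattice (α := -1 / 2) (β := 1 / 2)).not.mpr (by norm_num)
      using 2
    push_cast; ring
  have m₁ : 2 * (L.ω₁ / 2) ∈ L.lattice := by
    rw [mul_div_cancel₀ _ two_ne_zero]; exact L.ω₁_mem_lattice
  have m₂ : 2 * (L.ω₂ / 2) ∈ L.lattice := by
    rw [mul_div_cancel₀ _ two_ne_zero]; exact L.ω₂_mem_lattice
  have m₃ : 2 * ((L.ω₁ + L.ω₂) / 2) ∈ L.lattice := by
    rw [mul_div_cancel₀ _ two_ne_zero]; exact add_mem L.ω₁_mem_lattice L.ω₂_mem_lattice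
  have n₁₂ := L.weierstrassP_ne_of_two_mul_mem h₁ h₂ m₁ m₂ h₂₁
  have n₁₃ := L.weierstrassP_ne_of_two_mul_mem h₁ h₃ m₁ m₃ (by convert h₂ using 2; ring)
  have n₂₃ := L.weierstrassP_ne_of_two_mul_mem h₂ h₃ m₂ m₃ (by convert h₁ using 2; ring)
  have r₁ := L.derivWeierstrassP_sq _ h₁
  have r₂ := L.derivWeierstrassP_sq _ h₂
  have r₃ := L.derivWeierstrassP_sq _ h₃
  rw [L.derivWeierstrassP_eq_zero_of_two_mul_mem m₁] at r₁
  rw [L.derivWeierstrassP_eq_zero_of_two_mul_mem m₂] at r₂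
  rw [L.derivWeierstrassP_eq_zero_of_two_mul_mem m₃] at r₃
  generalize ℘[L] (L.ω₁ / 2) = x at *
  generalize ℘[L] (L.ω₂ / 2) = y at *
  generalize ℘[L] ((L.ω₁ + L.ω₂) / 2) = z at *
  have a₁ : 4 * (x ^ 2 + x * y + y ^ 2) = L.g₂ :=
    mul_left_cancel₀ (sub_ne_zero.mpr n₁₂) (by linear_combination r₂ - r₁)
  have a₂ : 4 * (x ^ 2 + x * z + z ^ 2) = L.g₂ :=
    mul_left_cancel₀ (sub_ne_zero.mpr n₁₃) (by linear_combination r₃ - r₁)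
  have s : x + y + z = 0 :=
    mul_left_cancel₀ (sub_ne_zero.mpr n₂₃) (by linear_combination (a₁ - a₂) / 4)
  linear_combination -a₁ + 4 * (x + y) * s

end PeriodPair

section Ramanujan

open UpperHalfPlane hiding I
open ModularForm EisensteinSeries Derivative MatrixGroups Manifold OnePoint
open scoped Real

lemma tendsto_atImInfty_of_hasSum_qParam {f : ℍ → ℂ} {c : ℕ → ℂ}
    (hf : ∀ τ : ℍ, HasSum (fun m ↦ c m • Function.Periodic.qParam 1 τ ^ m) (f τ)) :
    Tendsto f atImInfty (𝓝 (c 0)) := by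
  have hd : ∀ τ : ℍ, f τ = c 0 + Function.Periodic.qParam 1 τ *
      ∑' m, c (m + 1) • Function.Periodic.qParam 1 τ ^ m := by
    intro τ
    rw [← (hf τ).tsum_eq, (hf τ).summable.tsum_eq_zero_add, ← tsum_mul_left]
    simp only [pow_zero, smul_eq_mul, mul_one, add_right_inj]
    exact tsum_congr fun m ↦ by ring
  have hb : IsBoundedAtImInfty
      (fun τ : ℍ ↦ ∑' m, c (m + 1) • Function.Periodic.qParam 1 τ ^ m) := by
    refine isBoundedAtImInfty_of_hasSum_qExpansion (c := fun m ↦ c (m + 1)) one_pos fun τ ↦ ?_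
    refine Summable.hasSum ?_
    have := ((summable_nat_add_iff 1).mpr (hf τ).summable).mul_left
      (Function.Periodic.qParam 1 τ)⁻¹
    refine this.congr fun m ↦ ?_
    have : Function.Periodic.qParam 1 (τ : ℂ) ≠ 0 := Function.Periodic.qParam_ne_zero _
    simp only [smul_eq_mul]
    field_simp
    ring
  have h0 := (qParam_tendsto_atImInfty one_pos).zero_mul_isBoundedUnder_le hb.isBoundedUnder_le
  rw [funext hd]
  simpa using h0.const_add (c 0)

lemma tendsto_E2_atImInfty : Tendsto E2 atImInfty (𝓝 1) := by
  have := tendsto_atImInfty_of_hasSum_qParam (f := E2)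
    (c := fun m ↦ if m = 0 then 1 else -24 * ArithmeticFunction.sigma 1 m) fun τ ↦ by
    simpa only [Function.Periodic.qParam, ofReal_one, div_one] using hasSum_qExpansion_E2 (z := τ)
  simpa using this

lemma tendsto_E₄_atImInfty : Tendsto E₄ atImInfty (𝓝 1) := by
  have := tendsto_atImInfty_of_hasSum_qParam (f := E₄)
    (c := fun m ↦ (qExpansion 1 E₄).coeff m) fun τ ↦
      ModularForm.hasSum_qExpansion E₄ one_pos one_mem_strictPeriods_SL τ
  rwa [E_qExpansion_coeff_zero _ ⟨2, rfl⟩] at this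

/-- A holomorphic function with a limit at `i∞` has derivative tending to zero there. -/
lemma tendsto_normalizedDerivOfComplex_atImInfty {F : ℍ → ℂ} {a : ℂ} (hF : MDiff F)
    (h : Tendsto F atImInfty (𝓝 a)) : Tendsto (D F) atImInfty (𝓝 0) := by
  have hz : IsZeroAtImInfty (fun τ ↦ F τ - a) := by
    simpa using! h.sub_const a
  suffices Tendsto (fun τ : ℍ ↦ deriv (F ∘ ofComplex) τ) atImInfty (𝓝 0) by
    have h := this.const_mul (2 * π * I)⁻¹
    rw [mul_zero] at h
    exact h
  change IsZeroAtImInfty _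
  rw [isZeroAtImInfty_iff] at hz ⊢
  intro ε hε
  obtain ⟨A, hA⟩ := hz ε hε
  refine ⟨max A 0 + 2, fun τ hτ ↦ ?_⟩
  have him : ∀ z ∈ Metric.closedBall (τ : ℂ) 1, max A 0 < z.im := by
    intro z hz
    have := (abs_im_le_norm (z - τ)).trans (mem_closedBall_iff_norm.mp hz)
    rw [sub_im, abs_le] at this
    have h₁ : (τ : ℂ).im = τ.im := rfl
    linarith
  rw [UpperHalfPlane.mdifferentiable_iff] at hF
  rw [← deriv_sub_const a]
  have := Complex.norm_deriv_le_of_forall_mem_sphere_norm_le (c := (τ : ℂ)) (R := 1) (C := ε)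
    (f := fun z ↦ (F ∘ ofComplex) z - a) one_pos ?_ ?_
  · simpa using this
  · refine DifferentiableOn.diffContOnCl ?_
    rw [closure_ball _ one_ne_zero]
    exact (hF.mono fun z hz ↦ (le_max_right _ _).trans_lt (him z hz)).sub_const a
  · intro z hz
    have h₁ := him z (Metric.sphere_subset_closedBall hz)
    have h₂ : 0 < z.im := (le_max_right _ _).trans_lt h₁
    simp only [Function.comp_apply, ofComplex_apply_of_im_pos h₂]
    exact hA ⟨z, h₂⟩ ((le_max_left _ _).trans h₁.le)

lemma hasDerivAt_D2_comp_ofComplex (γ : SL(2, ℤ)) (z : ℍ) :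
    HasDerivAt (D2 γ ∘ ofComplex) (-(2 * π * I)⁻¹ * D2 γ z ^ 2) z := by
  have hz : denom γ z ≠ 0 := denom_ne_zero _ _
  have h : (D2 γ ∘ ofComplex) =ᶠ[𝓝 (z : ℂ)]
      fun w ↦ (2 * π * I * γ 1 0) * ((γ 1 0 : ℂ) * w + γ 1 1)⁻¹ := by
    filter_upwards [isOpen_upperHalfPlaneSet.mem_nhds z.im_pos] with w hw
    simp only [Function.comp_apply, D2, ofComplex_apply_of_im_pos hw]
    rfl
  refine HasDerivAt.congr_of_eventuallyEq ?_ h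
  rw [ModularGroup.denom_apply] at hz
  have h₁ : HasDerivAt (fun w : ℂ ↦ (γ 1 0 : ℂ) * w + γ 1 1) (γ 1 0) z := by
    simpa using ((hasDerivAt_id (z : ℂ)).const_mul (γ 1 0 : ℂ)).add_const (γ 1 1 : ℂ)
  refine ((h₁.fun_inv hz).const_mul (2 * π * I * γ 1 0)).congr_deriv ?_
  have hpi : (2 * π * I : ℂ) ≠ 0 := two_pi_I_ne_zero
  simp only [D2, ModularGroup.denom_apply]
  field_simp

lemma slash_normalizedDeriv_E2_sub (γ : SL(2, ℤ)) :
    (D E2 - (12 : ℂ)⁻¹ • E2 ^ 2) ∣[(4 : ℤ)] γ = D E2 - (12 : ℂ)⁻¹ • E2 ^ 2 := by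
  ext z
  have hsq : (E2 ^ 2) ∣[(4 : ℤ)] γ = (E2 ∣[(2 : ℤ)] γ) ^ 2 := by
    rw [sq, sq]
    exact ModularForm.mul_slash_SL2 2 2 γ E2 E2
  have hslash : (D (E2 ∣[(2 : ℤ)] γ)) z = (D E2 ∣[(4 : ℤ)] γ) z -
      2 * (2 * π * I)⁻¹ * (γ 1 0 / denom γ z) * (E2 ∣[(2 : ℤ)] γ) z := by
    simp [normalizedDerivOfComplex_SL_slash (k := 2) E2_mdifferentiable]
  have hD : (D (E2 ∣[(2 : ℤ)] γ)) z = D E2 z -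
      (2 * π * I)⁻¹ * (1 / (2 * riemannZeta 2) * (-(2 * π * I)⁻¹ * D2 γ z ^ 2)) := by
    rw [E2_slash_action]
    have h := (UpperHalfPlane.mdifferentiableAt_iff.mp (E2_mdifferentiable z)).hasDerivAt.sub
      ((hasDerivAt_D2_comp_ofComplex γ z).const_smul (1 / (2 * riemannZeta 2)))
    simp only [normalizedDerivOfComplex]
    rw [← mul_sub]
    exact congrArg _ h.deriv
  have hE : (E2 ∣[(2 : ℤ)] γ) z = E2 z - 1 / (2 * riemannZeta 2) * D2 γ z := by
    rw [E2_slash_action]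
    rfl
  have hc : (γ 1 0 : ℂ) / denom γ z = (2 * π * I)⁻¹ * D2 γ z := by
    have hpi : (2 * π * I : ℂ) ≠ 0 := two_pi_I_ne_zero
    rw [D2]
    field_simp
  have hI : (2 * π * I : ℂ)⁻¹ ^ 2 = -(4 * (π : ℂ) ^ 2)⁻¹ := by
    rw [inv_pow, mul_pow, mul_pow, I_sq, ← inv_neg]
    ring_nf
  have hpi : (π : ℂ) ≠ 0 := by exact_mod_cast Real.pi_ne_zero
  have hgoal : ((D E2 - (12 : ℂ)⁻¹ • E2 ^ 2) ∣[(4 : ℤ)] γ) z =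
      (D E2 ∣[(4 : ℤ)] γ) z - 12⁻¹ * (E2 ∣[(2 : ℤ)] γ) z ^ 2 := by
    rw [sub_eq_add_neg, SlashAction.add_slash, SlashAction.neg_slash, SL_smul_slash, hsq]
    simp [sub_eq_add_neg]
  have hslash' : (D E2 ∣[(4 : ℤ)] γ) z = D E2 z + (2 * π * I)⁻¹ ^ 2 *
      (1 / (2 * riemannZeta 2) * D2 γ z ^ 2 + 2 * D2 γ z * (E2 ∣[(2 : ℤ)] γ) z) := by
    linear_combination hD - hslash + 2 * (2 * π * I)⁻¹ * (E2 ∣[(2 : ℤ)] γ) z * hc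
  rw [hgoal, hslash', hE, hI, riemannZeta_two]
  simp only [Pi.sub_apply, Pi.smul_apply, Pi.pow_apply, smul_eq_mul]
  field_simp
  ring

/-- The Ramanujan differential equation for `E₂`. -/
theorem normalizedDerivOfComplex_E2 (z : ℍ) : D E2 z = (E2 z ^ 2 - E₄ z) / 12 := by
  have hlim : Tendsto (D E2 - (12 : ℂ)⁻¹ • E2 ^ 2) atImInfty (𝓝 (-12⁻¹)) := by
    have := (tendsto_normalizedDerivOfComplex_atImInfty E2_mdifferentiable
      tendsto_E2_atImInfty).sub ((tendsto_E2_atImInfty.pow 2).const_smul (12 : ℂ)⁻¹)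
    simpa using! this
  let F : ModularForm 𝒮ℒ 4 :=
    { toFun := D E2 - (12 : ℂ)⁻¹ • E2 ^ 2
      slash_action_eq' := fun _ ⟨γ, hγ⟩ ↦ hγ ▸ slash_normalizedDeriv_E2_sub γ
      holo' := (normalizedDerivOfComplex_mdifferentiable E2_mdifferentiable).sub
        ((E2_mdifferentiable.pow 2).const_smul _)
      bdd_at_cusps' := fun {c} hc ↦ by
        rw [Subgroup.IsArithmetic.isCusp_iff_isCusp_SL2Z] at hc
        rw [isBoundedAt_iff_forall_SL2Z hc]
        intro γ _
        rw [slash_normalizedDeriv_E2_sub γ]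
        exact hlim.isBigO_one ℝ }
  obtain ⟨c, hc⟩ : ∃ c : ℂ, c • E₄ = F :=
    (finrank_eq_one_iff_of_nonzero' E₄ (E_ne_zero _ ⟨2, rfl⟩)).mp
      (Module.rank_eq_one_iff_finrank_eq_one.mp levelOne_weight_four_rank_one) F
  have hF : ∀ z, c * E₄ z = D E2 z - 12⁻¹ * E2 z ^ 2 := fun z ↦ DFunLike.congr_fun hc z
  have hc' : c = -12⁻¹ := by
    have h₁ := tendsto_E₄_atImInfty.const_mul c
    rw [funext hF, mul_one] at h₁
    exact tendsto_nhds_unique h₁ hlim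
  have := hF z
  rw [hc'] at this
  linear_combination -this

end Ramanujan

section QuasiPeriod

open UpperHalfPlane hiding I
open EisensteinSeries
open scoped PeriodPair Real

lemma UpperHalfPlane.ofReal_add_ofReal_mul_eq_zero {τ : ℍ} {a b : ℝ} (h : (a : ℂ) + b * τ = 0) :
    a = 0 ∧ b = 0 := by
  have hb : b = 0 := by
    have := congrArg Complex.im h
    simpa [τ.im_ne_zero] using this
  subst hb
  simpa using h

/-- The pair of periods `(1, τ)`. -/
noncomputable def UpperHalfPlane.periodPair (τ : ℍ) : PeriodPair where
  ω₁ := 1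
  ω₂ := τ
  indep := LinearIndependent.pair_iff.mpr fun a b h ↦
    τ.ofReal_add_ofReal_mul_eq_zero (by simpa using h)

lemma UpperHalfPlane.coe_latticeEquivProd_symm_periodPair (τ : ℍ) (w : ℤ × ℤ) :
    (τ.periodPair.latticeEquivProd.symm w : ℂ) = w.1 + w.2 * τ := by
  rw [PeriodPair.latticeEquiv_symm_apply]
  simp [periodPair]

lemma wp_eq_weierstrassP (τ : ℍ) (z : ℂ) : wp τ z = ℘[τ.periodPair] z := by
  have h := τ.periodPair.latticeEquivProd.symm.toEquiv.hasSum_iff.mpr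
    (τ.periodPair.hasSum_weierstrassP z)
  simp only [Function.comp_def, LinearEquiv.coe_toEquiv,
    UpperHalfPlane.coe_latticeEquivProd_symm_periodPair] at h
  rw [wp, ← h.tsum_eq, ← h.summable.tsum_subtype_add_tsum_subtype_compl {0}]
  congr 1
  · simp
  · simp only [inv_pow, one_div]
    rfl

lemma UpperHalfPlane.G_four_periodPair (τ : ℍ) :
    τ.periodPair.G 4 = π ^ 4 / 45 * ModularForm.E₄ τ := by
  have h := tsum_eisSummand_eq_riemannZeta_mul_eisensteinSeries (k := 4) (by norm_num) τ
  have hE : ModularForm.E₄ τ = 1 / 2 * eisensteinSeries (N := 1) 0 (4 : ℕ) τ := rfl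
  have hG : τ.periodPair.G 4 = ∑' v : Fin 2 → ℤ, eisSummand (4 : ℕ) v τ := by
    rw [PeriodPair.G, ← τ.periodPair.latticeEquivProd.symm.toEquiv.tsum_eq,
      ← ((finTwoArrowEquiv ℤ).trans (Equiv.prodComm ℤ ℤ)).tsum_eq]
    refine tsum_congr fun v ↦ ?_
    simp only [LinearEquiv.coe_toEquiv, coe_latticeEquivProd_symm_periodPair, eisSummand]
    simp [add_comm]
  rw [hG, h, hE, Nat.cast_ofNat, riemannZeta_four]
  push_cast
  ring

lemma hasSum_int_sub_of_summable {h : ℤ → ℂ} {a : ℂ} (hs : Summable fun m ↦ h m - h (m + 1))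
    (hb : Tendsto h atBot (𝓝 a)) (ht : Tendsto h atTop (𝓝 a)) :
    HasSum (fun m ↦ h m - h (m + 1)) 0 := by
  have h₁ := hs.hasSum.comp Finset.tendsto_Ico_neg
  have h₂ : Tendsto (fun N : ℕ ↦ h (-N) - h N) atTop (𝓝 (a - a)) :=
    (hb.comp (tendsto_neg_atTop_atBot.comp tendsto_natCast_atTop_atTop)).sub
      (ht.comp tendsto_natCast_atTop_atTop)
  rw [sub_self] at h₂
  have h₃ := tendsto_nhds_unique h₂ (h₁.congr fun N ↦ Finset.sum_Ico_int_sub N h)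
  rw [h₃]
  exact hs.hasSum

lemma intervalIntegral_inv_sq {a : ℂ} (ha : a.im ≠ 0) :
    ∫ x : ℝ in 0..1, 1 / (a + x) ^ 2 = 1 / a - 1 / (a + 1) := by
  have hne (x : ℝ) : a + x ≠ 0 := fun h ↦ ha (by simpa using congrArg Complex.im h)
  have hd : ∀ x ∈ Set.uIcc (0 : ℝ) 1,
      HasDerivAt (fun x : ℝ ↦ -(a + x)⁻¹) (1 / (a + x) ^ 2) x := by
    intro x _
    have h₁ : HasDerivAt (fun z : ℂ ↦ -(a + z)⁻¹) (1 / (a + x) ^ 2) (x : ℂ) := by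
      have := (((hasDerivAt_id (x : ℂ)).const_add a).fun_inv (hne x)).neg
      exact this.congr_deriv (by simp [neg_div])
    exact h₁.comp_ofReal
  rw [intervalIntegral.integral_eq_sub_of_hasDerivAt hd]
  · simp only [ofReal_one, ofReal_zero, add_zero, one_div]
    ring
  · refine Continuous.intervalIntegrable ?_ _ _
    exact continuous_const.div (by fun_prop) fun x ↦ pow_ne_zero 2 (hne x)

lemma hasSum_int_inv_sub_inv {a : ℂ} (hs : Summable fun m : ℤ ↦ 1 / (a - m) - 1 / (a - m + 1)) :
    HasSum (fun m : ℤ ↦ 1 / (a - m) - 1 / (a - m + 1)) 0 := by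
  have hlim : Tendsto (fun m : ℤ ↦ -(1 / (a - m + 1))) cofinite (𝓝 0) := by
    have h₁ : Tendsto (fun m : ℤ ↦ ‖(m : ℝ)‖ - ‖a + 1‖) cofinite atTop :=
      tendsto_atTop_add_const_right _ _ (tendsto_norm_cocompact_atTop.comp Int.tendsto_coe_cofinite)
    have h₂ : Tendsto (fun m : ℤ ↦ ‖a - m + 1‖) cofinite atTop := by
      refine tendsto_atTop_mono (fun m ↦ ?_) h₁
      have := norm_sub_norm_le (m : ℂ) (a + 1)
      rw [norm_sub_rev, norm_intCast, ← Real.norm_eq_abs] at this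
      rwa [sub_add_eq_add_sub]
    simpa using (tendsto_inv₀_cobounded.comp (tendsto_norm_atTop_iff_cobounded.mp h₂)).neg
  rw [Int.cofinite_eq, tendsto_sup] at hlim
  have hf : (fun m : ℤ ↦ 1 / (a - m) - 1 / (a - m + 1)) =
      fun m : ℤ ↦ -(1 / (a - m + 1)) - -(1 / (a - (m + 1 : ℤ) + 1)) := by
    funext m
    push_cast
    ring
  rw [hf] at hs ⊢
  exact hasSum_int_sub_of_summable (h := fun m : ℤ ↦ -(1 / (a - m + 1))) hs hlim.1 hlim.2

/-- The integral of `℘` along the horizontal period through `τ / 2`. -/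
lemma integral_weierstrassP_periodPair (τ : ℍ) :
    ∫ x : ℝ in 0..1, ℘[τ.periodPair] (τ / 2 + x) = -G2 τ := by
  have him (w : ℤ × ℤ) : ((τ : ℂ) / 2 - (w.1 + w.2 * τ)).im ≠ 0 := by
    have h : ((τ : ℂ) / 2 - (w.1 + w.2 * τ)).im = (1 - 2 * w.2 : ℤ) / 2 * τ.im := by
      simp
      ring
    rw [h]
    refine mul_ne_zero (div_ne_zero ?_ two_ne_zero) τ.im_ne_zero
    exact_mod_cast (by omega : 1 - 2 * w.2 ≠ 0)
  have hne (w : ℤ × ℤ) (x : ℝ) : (τ : ℂ) / 2 + x - (w.1 + w.2 * τ) ≠ 0 := by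
    intro h
    apply him w
    have := congrArg Complex.im h
    simpa using this
  let e : ℤ × ℤ ≃ τ.periodPair.lattice :=
    (Equiv.prodComm ℤ ℤ).trans τ.periodPair.latticeEquivProd.symm.toEquiv
  have he (w : ℤ × ℤ) : (e w : ℂ) = w.2 + w.1 * τ :=
    τ.coe_latticeEquivProd_symm_periodPair w.swap
  have hcont (l : τ.periodPair.lattice) :
      Continuous fun x : ℝ ↦ 1 / ((τ : ℂ) / 2 + x - l) ^ 2 - 1 / (l : ℂ) ^ 2 := by
    obtain ⟨w, rfl⟩ := e.surjective l
    refine (continuous_const.div (by fun_prop) fun x ↦ pow_ne_zero 2 ?_).sub continuous_const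
    rw [he]
    exact hne w.swap x
  have hunif : TendstoUniformlyOn (fun (s : Finset τ.periodPair.lattice) (x : ℝ) ↦
      ∑ l ∈ s, (1 / ((τ : ℂ) / 2 + x - l) ^ 2 - 1 / (l : ℂ) ^ 2))
      (fun x : ℝ ↦ ℘[τ.periodPair] (τ / 2 + x)) atTop (Set.uIcc 0 1) := by
    have h := (hasSumLocallyUniformly_iff_tendstoLocallyUniformly.mp
      τ.periodPair.hasSumLocallyUniformly_weierstrassP).comp
      (fun x : ℝ ↦ (τ : ℂ) / 2 + x) (by fun_prop)
    exact (tendstoLocallyUniformlyOn_iff_tendstoUniformlyOn_of_compact isCompact_uIcc).mp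
      h.tendstoLocallyUniformlyOn
  have : Countable τ.periodPair.lattice := e.symm.injective.countable
  have hsum : HasSum (fun l : τ.periodPair.lattice ↦ ∫ x : ℝ in 0..1,
      (1 / ((τ : ℂ) / 2 + x - l) ^ 2 - 1 / (l : ℂ) ^ 2))
      (∫ x : ℝ in 0..1, ℘[τ.periodPair] (τ / 2 + x)) := by
    have h := hunif.tendsto_intervalIntegral_of_continuousOn (μ := MeasureTheory.volume)
      (.of_forall fun s ↦ (continuous_finsetSum s fun l _ ↦ hcont l).continuousOn)
    refine h.congr fun s ↦ ?_
    exact intervalIntegral.integral_finsetSum fun l _ ↦ (hcont l).intervalIntegrable _ _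
  have hterm (w : ℤ × ℤ) : ∫ x : ℝ in 0..1,
      (1 / ((τ : ℂ) / 2 + x - e w) ^ 2 - 1 / (e w : ℂ) ^ 2) =
      (1 / ((τ : ℂ) / 2 - w.1 * τ - w.2) - 1 / ((τ : ℂ) / 2 - w.1 * τ - w.2 + 1)) -
        eisSummand 2 ![w.1, w.2] τ := by
    have ha : ((τ : ℂ) / 2 - w.1 * τ - w.2).im ≠ 0 := by
      convert him w.swap using 2
      simp
      ring
    have hintegral : IntervalIntegrable (fun x : ℝ ↦ 1 / ((τ : ℂ) / 2 - w.1 * τ - w.2 + x) ^ 2)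
        MeasureTheory.volume 0 1 := by
      refine Continuous.intervalIntegrable (((hcont (e w)).add
        (continuous_const (y := 1 / (e w : ℂ) ^ 2))).congr fun x ↦ ?_) 0 1
      rw [Pi.add_apply, sub_add_cancel, he]
      ring
    rw [← intervalIntegral_inv_sq ha]
    have hc : eisSummand 2 ![w.1, w.2] τ = ∫ x : ℝ in (0 : ℝ)..1, 1 / (e w : ℂ) ^ 2 := by
      simp [eisSummand, he, add_comm]
    rw [hc, ← intervalIntegral.integral_sub hintegral (by simp)]
    refine intervalIntegral.integral_congr fun x _ ↦ ?_
    simp only [he]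
    ring
  have hsum' := e.hasSum_iff.mpr hsum
  simp only [Function.comp_def, hterm] at hsum'
  have hrow (n : ℤ) : HasSum (fun m : ℤ ↦
      (1 / ((τ : ℂ) / 2 - n * τ - m) - 1 / (τ / 2 - n * τ - m + 1)) -
        eisSummand 2 ![n, m] τ) (-e2Summand n τ) := by
    have hs := (hsum'.summable.prod_factor n).add (e2Summand_summable n τ)
    simp only [sub_add_cancel] at hs
    simpa [e2Summand] using (hasSum_int_inv_sub_inv hs).sub (e2Summand_summable n τ).hasSum
  have hG := hsum'.prod_fiberwise hrow
  have hG' : HasSum (e2Summand · τ) (-∫ x : ℝ in 0..1, ℘[τ.periodPair] (τ / 2 + x)) := by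
    simpa using hG.neg
  rw [G2, tsum_eq_of_summable_unconditional hG'.summable, hG'.tsum_eq, neg_neg]

lemma eta1_eq_G2 {zeta : ℂ → ℂ → ℂ} {eta1 : ℂ → ℂ} (hzeta : IsWeierstrassZeta zeta)
    (heta1 : IsEta1 zeta eta1) (τ : ℍ) : eta1 τ = G2 τ := by
  have hL (x : ℝ) : ¬ InLattice τ (τ / 2 + x) := by
    rintro ⟨m, n, h⟩
    have := congrArg Complex.im h
    have h₁ : (1 - 2 * n : ℤ) * τ.im = 0 := by
      simp at this
      push_cast
      linarith
    rcases mul_eq_zero.mp h₁ with h₂ | h₂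
    · have : 1 - 2 * n = 0 := by exact_mod_cast h₂
      omega
    · exact τ.im_ne_zero h₂
  have hcont : Continuous fun x : ℝ ↦ ℘[τ.periodPair] (τ / 2 + x) := by
    refine τ.periodPair.differentiableOn_weierstrassP.continuousOn.comp_continuous
      (by fun_prop) fun x hx ↦ hL x ?_
    obtain ⟨m, n, h⟩ := PeriodPair.mem_lattice.mp hx
    exact ⟨m, n, by simpa [UpperHalfPlane.periodPair] using h.symm⟩
  have hd : ∀ x ∈ Set.uIcc (0 : ℝ) 1,
      HasDerivAt (fun x : ℝ ↦ zeta τ (τ / 2 + x)) (-℘[τ.periodPair] (τ / 2 + x)) x := by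
    intro x _
    have := (hzeta τ τ.im_pos).2.1 _ (hL x)
    rw [wp_eq_weierstrassP] at this
    exact (this.comp_const_add (τ / 2 : ℂ) x).comp_ofReal
  have hintegral := intervalIntegral.integral_eq_sub_of_hasDerivAt hd
    (hcont.neg.intervalIntegrable 0 1)
  rw [intervalIntegral.integral_neg, integral_weierstrassP_periodPair, neg_neg] at hintegral
  have h0 := heta1 τ τ.im_pos (τ / 2) (by simpa using hL 0)
  rw [h0, hintegral]
  simp

lemma g2_eq_E₄ (τ : ℍ) : g2 τ = 4 * π ^ 4 / 3 * ModularForm.E₄ τ := by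
  have h := τ.periodPair.g₂_eq_of_half_periods
  have h₁ : τ.periodPair.ω₁ = 1 := rfl
  have h₂ : τ.periodPair.ω₂ = τ := rfl
  rw [h₁, h₂] at h
  rw [g2, e1, e2, e3, wp_eq_weierstrassP, wp_eq_weierstrassP, wp_eq_weierstrassP, ← h,
    PeriodPair.g₂, τ.G_four_periodPair]
  ring

lemma G2_eq_E2 (τ : ℍ) : G2 τ = π ^ 2 / 3 * E2 τ := by
  have hpi : (π : ℂ) ≠ 0 := by exact_mod_cast Real.pi_ne_zero
  rw [E2, Pi.smul_apply, riemannZeta_two, smul_eq_mul]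
  field_simp
  ring

end QuasiPeriod

/-- Lemma 2.3 (v): `η₁` is holomorphic in `τ` and
`dη₁/dτ = (i/(4π))(2η₁² - g₂/6)`. -/
theorem tau_deriv_eta1
    (zeta : ℂ → ℂ → ℂ) (eta1 : ℂ → ℂ)
    (hzeta : IsWeierstrassZeta zeta) (heta1 : IsEta1 zeta eta1) :
    DifferentiableOn ℂ eta1 {τ : ℂ | 0 < τ.im} ∧
    ∀ τ : ℂ, 0 < τ.im →
      HasDerivAt eta1
        ((Complex.I / (4 * (Real.pi : ℂ))) *
          (2 * (eta1 τ) ^ 2 - (1 / 6) * g2 τ)) τ := by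
  have hderiv : ∀ τ : ℂ, 0 < τ.im → HasDerivAt eta1
      ((Complex.I / (4 * (Real.pi : ℂ))) * (2 * (eta1 τ) ^ 2 - (1 / 6) * g2 τ)) τ := by
    intro τ hτ
    obtain ⟨t, rfl⟩ : ∃ t : UpperHalfPlane, (t : ℂ) = τ := ⟨⟨τ, hτ⟩, rfl⟩
    have heq : eta1 =ᶠ[𝓝 (t : ℂ)] fun w ↦
        (Real.pi : ℂ) ^ 2 / 3 * (EisensteinSeries.E2 ∘ UpperHalfPlane.ofComplex) w := by
      filter_upwards [UpperHalfPlane.isOpen_upperHalfPlaneSet.mem_nhds hτ] with w hw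
      rw [Function.comp_apply, UpperHalfPlane.ofComplex_apply_of_im_pos hw, ← G2_eq_E2]
      exact eta1_eq_G2 hzeta heta1 ⟨w, hw⟩
    have hE := (UpperHalfPlane.mdifferentiableAt_iff.mp
      (E2_mdifferentiable t)).hasDerivAt
    refine ((hE.const_mul _).congr_of_eventuallyEq heq).congr_deriv ?_
    have hpi : (Real.pi : ℂ) ≠ 0 := by exact_mod_cast Real.pi_ne_zero
    have hR := normalizedDerivOfComplex_E2 t
    rw [Derivative.normalizedDerivOfComplex, inv_mul_eq_iff_eq_mul₀ two_pi_I_ne_zero] at hR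
    rw [hR, eta1_eq_G2 hzeta heta1, G2_eq_E2, g2_eq_E₄]
    field_simp
    ring
  exact ⟨fun τ hτ ↦ (hderiv τ hτ).differentiableAt.differentiableWithinAt, hderiv⟩
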